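/- Let n ≥ 1 be an integer, a = (a_1,…,a_{p−1}) a vector of positive reals and b = (b_1,…,b_p) a vector of positive reals. Let ν be a Borel measure on [0,∞) such that ∫₀^∞ t^k dν(t) < ∞ for every k ∈ ℕ and such that ∫₀^∞ ₀F₁(−; n/2; −r²t²/4) dν(t) = p−1Fp(a;b;−r²) for every r ∈ ℝ. Then for every k ∈ ℕ: ∫₀^∞ t^{2k} dν(t) = 4^k · (a_1)_k⋯(a_{p−1})_k · (n/2)_k / ((b_1)_k⋯(b_p)_k). -/

import Mathlib

/-!
Write `W β z = ₀F₁(-; β; z)`. Integrating the power series of `W (n/2)` term by term against `ν`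
is not justified a priori, since nothing is assumed about the growth of the moments. Instead, both
sides of the representation are expanded to finite order at `r = 0`.

* On the half-line `x ≥ 0`, the function `F x = W β (-x)` with `β ≥ 1/2` is bounded by `1`: the
  differential equation `x F'' + β F' + F = 0` makes the energy `F² + x F'²` nonincreasing, with
  value `1` at `0` (`abs_W_neg_le_one`).
* Since `W β` has derivative `W (β + 1) / β`, the mean value inequality and induction on `K` turn
  this bound into a global Taylor estimate: the remainder of order `K` of `W β (-x)` is at most
  `2 ^ K * x ^ K` (`abs_W_sub_taylor_le`).
* This estimate can be integrated against `ν` using only the moment of order `2K`, so the left-hand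
  side equals a polynomial in `r²` built from the even moments, up to `O(r ^ (2K))`. The right-hand
  side is a convergent power series in `r²`, and the coefficients can be compared
  (`coeff_eq_zero_of_small`).
-/

/-- Rising factorial (Pochhammer symbol) `(x)_k = x(x+1)⋯(x+k-1)` for real `x`. -/
noncomputable def risingFactorial (x : ℝ) (k : ℕ) : ℝ := ∏ i ∈ Finset.range k, (x + (i : ℝ))

/-- The generalized hypergeometric function `pFq(a;b;z)` defined by its power series
(which converges for every `z` when `p ≤ q`). -/
noncomputable def pFq {p q : ℕ} (a : Fin p → ℝ) (b : Fin q → ℝ) (z : ℝ) : ℝ :=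
  ∑' k : ℕ,
    (∏ i, risingFactorial (a i) k) /
      ((∏ j, risingFactorial (b j) k) * (k.factorial : ℝ)) * z ^ k

open MeasureTheory

lemma risingFactorial_zero (x : ℝ) : risingFactorial x 0 = 1 := by simp [risingFactorial]

lemma risingFactorial_succ (x : ℝ) (k : ℕ) :
    risingFactorial x (k + 1) = risingFactorial x k * (x + k) := by
  simp [risingFactorial, Finset.prod_range_succ]

lemma risingFactorial_succ_left (x : ℝ) (k : ℕ) :
    risingFactorial x (k + 1) = x * risingFactorial (x + 1) k := by
  simp only [risingFactorial, Finset.prod_range_succ']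
  rw [mul_comm]
  congr 1
  · simp
  · refine Finset.prod_congr rfl fun i _ => ?_
    push_cast
    ring

lemma risingFactorial_pos {x : ℝ} (hx : 0 < x) (k : ℕ) : 0 < risingFactorial x k :=
  Finset.prod_pos fun i _ => by positivity

lemma pow_le_risingFactorial {x : ℝ} (hx : 0 < x) (k : ℕ) : x ^ k ≤ risingFactorial x k := by
  have h : ∏ i ∈ Finset.range k, x ≤ ∏ i ∈ Finset.range k, (x + (i : ℝ)) :=
    Finset.prod_le_prod (fun i _ => hx.le) fun i _ => by
      have : (0 : ℝ) ≤ i := Nat.cast_nonneg i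
      linarith
  simpa [risingFactorial] using h

lemma risingFactorial_le_pow_mul {x y : ℝ} (hx : 0 < x) (hy : 0 < y) (k : ℕ) :
    risingFactorial x k ≤ (1 + x / y) ^ k * risingFactorial y k := by
  have h : ∏ i ∈ Finset.range k, (x + (i : ℝ)) ≤
      ∏ i ∈ Finset.range k, ((1 + x / y) * (y + (i : ℝ))) :=
    Finset.prod_le_prod (fun i _ => by positivity) fun i _ => by
      have h1 : (1 + x / y) * (y + (i : ℝ)) = x + i + (y + x / y * i) := by
        field_simp
        ring
      have : 0 ≤ y + x / y * i := by positivity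
      linarith
  simpa [risingFactorial, Finset.prod_mul_distrib] using h

/-- The `k`-th Taylor coefficient of `pFq(a;b;z)`. -/
noncomputable def hypCoeff {p q : ℕ} (a : Fin p → ℝ) (b : Fin q → ℝ) (k : ℕ) : ℝ :=
  (∏ i, risingFactorial (a i) k) / ((∏ j, risingFactorial (b j) k) * (k.factorial : ℝ))

/-- The coefficients of `p-1Fp` are nonnegative and dominated by those of an exponential: each
`(a_i)_k` is controlled by the corresponding `(b_{i+1})_k`, and `(b_0)_k ≥ b_0 ^ k`. -/
lemma hypCoeff_bound {p : ℕ} (a : Fin p → ℝ) (b : Fin (p + 1) → ℝ)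
    (ha : ∀ i, 0 < a i) (hb : ∀ j, 0 < b j) :
    ∃ D : ℝ, 0 ≤ D ∧ ∀ k, 0 ≤ hypCoeff a b k ∧ hypCoeff a b k ≤ D ^ k / (k.factorial : ℝ) := by
  have hM : ∀ i, 0 < 1 + a i / b i.succ := fun i => by
    have := ha i
    have := hb i.succ
    positivity
  have hD : 0 ≤ (∏ i, (1 + a i / b i.succ)) / b 0 :=
    div_nonneg (Finset.prod_nonneg fun i _ => (hM i).le) (hb 0).le
  refine ⟨(∏ i, (1 + a i / b i.succ)) / b 0, hD, fun k => ?_⟩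
  have hA : 0 < ∏ i, risingFactorial (a i) k :=
    Finset.prod_pos fun i _ => risingFactorial_pos (ha i) k
  have hB : 0 < ∏ j, risingFactorial (b j) k :=
    Finset.prod_pos fun i _ => risingFactorial_pos (hb i) k
  refine ⟨by unfold hypCoeff; positivity, ?_⟩
  have hf : (0 : ℝ) < k.factorial := by positivity
  have h0 := hb 0
  rw [hypCoeff, ← div_div]
  refine div_le_div_of_nonneg_right ?_ hf.le
  rw [div_le_iff₀ hB, Fin.prod_univ_succ]
  have h1 : ∏ i, risingFactorial (a i) k ≤
      (∏ i, (1 + a i / b i.succ)) ^ k * ∏ i : Fin p, risingFactorial (b i.succ) k := by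
    rw [← Finset.prod_pow, ← Finset.prod_mul_distrib]
    exact Finset.prod_le_prod (fun i _ => (risingFactorial_pos (ha i) k).le)
      fun i _ => risingFactorial_le_pow_mul (ha i) (hb i.succ) k
  refine h1.trans ?_
  have h2 := pow_le_risingFactorial h0 k
  have hN : 0 ≤ ((∏ i, (1 + a i / b i.succ)) / b 0) ^ k := pow_nonneg hD k
  have hS : 0 ≤ ∏ i : Fin p, risingFactorial (b i.succ) k :=
    Finset.prod_nonneg fun i _ => (risingFactorial_pos (hb _) k).le
  calc (∏ i, (1 + a i / b i.succ)) ^ k * ∏ i : Fin p, risingFactorial (b i.succ) k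
      = ((∏ i, (1 + a i / b i.succ)) / b 0) ^ k *
          (b 0 ^ k * ∏ i : Fin p, risingFactorial (b i.succ) k) := by
        rw [div_pow]
        field_simp
    _ ≤ _ := by gcongr

lemma hypCoeff_summable {p : ℕ} (a : Fin p → ℝ) (b : Fin (p + 1) → ℝ)
    (ha : ∀ i, 0 < a i) (hb : ∀ j, 0 < b j) (z : ℝ) :
    Summable fun k => hypCoeff a b k * z ^ k := by
  obtain ⟨D, -, hD⟩ := hypCoeff_bound a b ha hb
  refine Summable.of_norm_bounded (Real.summable_pow_div_factorial (D * |z|)) fun k => ?_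
  rw [Real.norm_eq_abs, abs_mul, abs_pow, abs_of_nonneg (hD k).1, mul_pow, mul_div_right_comm]
  exact mul_le_mul_of_nonneg_right (hD k).2 (by positivity)

/-- Taylor estimate for `p-1Fp` on the unit interval. -/
lemma pFq_sub_taylor_le {p : ℕ} (a : Fin p → ℝ) (b : Fin (p + 1) → ℝ)
    (ha : ∀ i, 0 < a i) (hb : ∀ j, 0 < b j) (K : ℕ) :
    ∃ C : ℝ, ∀ z : ℝ, |z| ≤ 1 →
      |pFq a b z - ∑ k ∈ Finset.range K, hypCoeff a b k * z ^ k| ≤ C * |z| ^ K := by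
  have hs1 : Summable fun k => hypCoeff a b (k + K) := by
    simpa using (summable_nat_add_iff K).2 (hypCoeff_summable a b ha hb 1)
  obtain ⟨D, -, hD⟩ := hypCoeff_bound a b ha hb
  refine ⟨∑' k, hypCoeff a b (k + K), fun z hz => ?_⟩
  have hs := hypCoeff_summable a b ha hb z
  have h1 : pFq a b z - ∑ k ∈ Finset.range K, hypCoeff a b k * z ^ k =
      ∑' k, hypCoeff a b (k + K) * z ^ (k + K) := by
    rw [sub_eq_iff_eq_add', hs.sum_add_tsum_nat_add K]
    rfl
  rw [h1, ← Real.norm_eq_abs, ← tsum_mul_right]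
  refine tsum_of_norm_bounded (hs1.mul_right _).hasSum fun k => ?_
  rw [Real.norm_eq_abs, abs_mul, abs_of_nonneg (hD _).1, abs_pow]
  refine mul_le_mul_of_nonneg_left ?_ (hD _).1
  exact pow_le_pow_of_le_one (abs_nonneg z) hz (by omega)

/-- The Taylor coefficients of `₀F₁(-; β; z)`. -/
noncomputable def wCoeff (β : ℝ) (k : ℕ) : ℝ := 1 / (risingFactorial β k * (k.factorial : ℝ))

/-- The confluent limit function `₀F₁(-; β; z)`, as a function of `β` and `z`. -/
noncomputable def W (β z : ℝ) : ℝ := ∑' k : ℕ, wCoeff β k * z ^ k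

lemma hypCoeff_elim0 (β : ℝ) (k : ℕ) :
    hypCoeff (Fin.elim0 : Fin 0 → ℝ) (fun _ : Fin 1 => β) k = wCoeff β k := by
  simp [hypCoeff, wCoeff]

lemma pFq_elim0 (β z : ℝ) :
    pFq (Fin.elim0 : Fin 0 → ℝ) (fun _ : Fin 1 => β) z = W β z := by
  unfold W
  simp_rw [← hypCoeff_elim0]
  rfl

lemma W_summable {β : ℝ} (hβ : 0 < β) (z : ℝ) : Summable fun k => wCoeff β k * z ^ k := by
  have := hypCoeff_summable (Fin.elim0 : Fin 0 → ℝ) (fun _ : Fin 1 => β)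
    (fun i => i.elim0) (fun _ => hβ) z
  simpa only [hypCoeff_elim0] using this

lemma wCoeff_zero (β : ℝ) : wCoeff β 0 = 1 := by simp [wCoeff, risingFactorial_zero]

lemma wCoeff_pos {β : ℝ} (hβ : 0 < β) (k : ℕ) : 0 < wCoeff β k := by
  have := risingFactorial_pos hβ k
  unfold wCoeff
  positivity

lemma wCoeff_succ {β : ℝ} (hβ : 0 < β) (k : ℕ) :
    wCoeff β (k + 1) * ((k : ℝ) + 1) = wCoeff (β + 1) k / β := by
  have h := (risingFactorial_pos (by linarith : 0 < β + 1) k).ne'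
  have hk : (k.factorial : ℝ) ≠ 0 := by positivity
  have hk1 : (k : ℝ) + 1 ≠ 0 := by positivity
  rw [wCoeff, wCoeff, risingFactorial_succ_left, Nat.factorial_succ]
  push_cast
  field_simp

lemma W_zero (β : ℝ) : W β 0 = 1 := by
  unfold W
  rw [tsum_eq_single 0 (fun k hk => by simp [hk])]
  simp [wCoeff_zero]

lemma W_eq_one_add {β : ℝ} (hβ : 0 < β) (z : ℝ) :
    W β z = 1 + ∑' k : ℕ, wCoeff β (k + 1) * z ^ (k + 1) := by
  unfold W
  rw [(W_summable hβ z).tsum_eq_zero_add]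
  simp [wCoeff_zero]

lemma W_hasDerivAt {β : ℝ} (hβ : 0 < β) (z : ℝ) :
    HasDerivAt (W β) (W (β + 1) z / β) z := by
  have hβ1 : 0 < β + 1 := by linarith
  -- the ball of radius `|z| + 1` contains both `z` and the centre `0`
  have key : HasDerivAt (fun y => ∑' k : ℕ, wCoeff β (k + 1) * y ^ (k + 1))
      (∑' k : ℕ, wCoeff (β + 1) k / β * z ^ k) z := by
    refine hasDerivAt_tsum_of_isPreconnected
      (u := fun k => wCoeff (β + 1) k * (|z| + 1) ^ k / β)
      (g := fun k y => wCoeff β (k + 1) * y ^ (k + 1))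
      (g' := fun k y => wCoeff (β + 1) k / β * y ^ k)
      (t := Metric.ball 0 (|z| + 1)) (y₀ := 0)
      ((W_summable hβ1 _).div_const β) Metric.isOpen_ball
      (convex_ball (0 : ℝ) _).isPreconnected ?_ ?_ ?_ ?_ ?_
    · intro k y _
      have := (hasDerivAt_pow (k + 1) y).const_mul (wCoeff β (k + 1))
      refine this.congr_deriv ?_
      rw [← wCoeff_succ hβ]
      push_cast
      ring
    · intro k y hy
      have hy' : |y| ≤ |z| + 1 := by
        rw [mem_ball_zero_iff, Real.norm_eq_abs] at hy
        exact hy.le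
      have hw := wCoeff_pos hβ1 k
      rw [Real.norm_eq_abs, abs_mul, abs_pow, abs_of_pos (by positivity), div_mul_eq_mul_div]
      gcongr
    · simp only [Metric.mem_ball, dist_self]
      positivity
    · simp [summable_zero]
    · simp
  have h2 : W β = fun y => 1 + ∑' k : ℕ, wCoeff β (k + 1) * y ^ (k + 1) :=
    funext fun y => W_eq_one_add hβ y
  have h3 : W (β + 1) z / β = ∑' k : ℕ, wCoeff (β + 1) k / β * z ^ k := by
    unfold W
    rw [← tsum_div_const]
    exact tsum_congr fun k => by ring
  rw [h2, h3]
  exact key.const_add 1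

/-- The contiguity relation `z W_{β+2} / (β(β+1)) + W_{β+1} = W_β`, that is, the Bessel
differential equation `z W'' + β W' = W`. -/
lemma W_contiguity {β : ℝ} (hβ : 0 < β) (z : ℝ) :
    z * (W (β + 1 + 1) z / (β * (β + 1))) + W (β + 1) z = W β z := by
  have hβ1 : 0 < β + 1 := by linarith
  have hβ2 : 0 < β + 1 + 1 := by linarith
  rw [W_eq_one_add hβ1, W_eq_one_add hβ]
  have h1 : z * (W (β + 1 + 1) z / (β * (β + 1))) =
      ∑' k : ℕ, wCoeff (β + 1 + 1) k / (β * (β + 1)) * z ^ (k + 1) := by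
    unfold W
    rw [← tsum_div_const, ← tsum_mul_left]
    exact tsum_congr fun k => by ring
  have hs1 : Summable fun k : ℕ => wCoeff (β + 1 + 1) k / (β * (β + 1)) * z ^ (k + 1) := by
    refine (((W_summable hβ2 z).div_const (β * (β + 1))).mul_left z).congr fun k => ?_
    ring
  have hs2 : Summable fun k : ℕ => wCoeff (β + 1) (k + 1) * z ^ (k + 1) :=
    (summable_nat_add_iff 1).2 (W_summable hβ1 z)
  rw [h1, add_left_comm, ← hs1.tsum_add hs2]
  congr 1
  refine tsum_congr fun k => ?_
  rw [← add_mul]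
  congr 1
  have e1 := wCoeff_succ hβ1 k
  have e2 : wCoeff (β + 1) (k + 1) * (β + (k + 1)) = wCoeff β (k + 1) * β := by
    have e3 := risingFactorial_succ β (k + 1)
    rw [risingFactorial_succ_left] at e3
    have p1 := (risingFactorial_pos hβ (k + 1)).ne'
    have p2 := (risingFactorial_pos hβ1 (k + 1)).ne'
    have p3 : ((k + 1).factorial : ℝ) ≠ 0 := by positivity
    push_cast at e3
    unfold wCoeff
    field_simp
    linarith
  have e4 : wCoeff (β + 1 + 1) k = wCoeff (β + 1) (k + 1) * (k + 1) * (β + 1) := by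
    rw [e1]
    field_simp
  have hβ0 := hβ.ne'
  have hβ10 := hβ1.ne'
  rw [e4]
  field_simp
  linear_combination e2

lemma W_neg_hasDerivAt {β : ℝ} (hβ : 0 < β) (x : ℝ) :
    HasDerivAt (fun x => W β (-x)) (-(W (β + 1) (-x) / β)) x := by
  have := (W_hasDerivAt hβ (-x)).comp x (hasDerivAt_neg x)
  simpa [Function.comp_def] using this

lemma W_continuous {β : ℝ} (hβ : 0 < β) : Continuous (W β) :=
  continuous_iff_continuousAt.2 fun z => (W_hasDerivAt hβ z).continuousAt

/-- The Bessel-type function is bounded by `1`: the energy `F² + x F'²` of `F x = W β (-x)` has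
derivative `(1 - 2β) F'²`. -/
lemma abs_W_neg_le_one {β : ℝ} (hβ : 1 / 2 ≤ β) {x : ℝ} (hx : 0 ≤ x) : |W β (-x)| ≤ 1 := by
  have hβ0 : 0 < β := by linarith
  have hβ1 : 0 < β + 1 := by linarith
  have hE : ∀ y : ℝ, HasDerivAt
      (fun y => W β (-y) ^ 2 + y * (W (β + 1) (-y) / β) ^ 2)
      ((1 - 2 * β) * (W (β + 1) (-y) / β) ^ 2) y := by
    intro y
    have h1 := (W_neg_hasDerivAt hβ0 y).pow 2
    have h2 := (hasDerivAt_id y).mul (((W_neg_hasDerivAt hβ1 y).div_const β).pow 2)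
    refine (h1.add h2).congr_deriv ?_
    have hc := W_contiguity hβ0 (-y)
    simp only [id, Nat.cast_ofNat, Pi.pow_apply, Nat.reduceSub, pow_one]
    rw [← hc]
    generalize W (β + 1 + 1) (-y) = u
    generalize W (β + 1) (-y) = v
    have hβ0' := hβ0.ne'
    have hβ1' := hβ1.ne'
    field_simp
    ring
  have hanti : AntitoneOn (fun y => W β (-y) ^ 2 + y * (W (β + 1) (-y) / β) ^ 2)
      (Set.Ici 0) := by
    refine antitoneOn_of_deriv_nonpos (convex_Ici 0)
      (fun y _ => (hE y).continuousAt.continuousWithinAt)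
      (fun y _ => (hE y).differentiableAt.differentiableWithinAt) fun y _ => ?_
    rw [(hE y).deriv]
    exact mul_nonpos_of_nonpos_of_nonneg (by linarith) (sq_nonneg _)
  have h := hanti (Set.mem_Ici.2 le_rfl) (Set.mem_Ici.2 hx) hx
  simp only [neg_zero, W_zero, zero_mul, add_zero, one_pow] at h
  have h3 : 0 ≤ x * (W (β + 1) (-x) / β) ^ 2 := by positivity
  exact (sq_le_one_iff_abs_le_one _).1 (by linarith)

lemma taylor_hasDerivAt {β : ℝ} (hβ : 0 < β) (K : ℕ) (x : ℝ) :
    HasDerivAt (fun x => ∑ k ∈ Finset.range (K + 1), wCoeff β k * (-x) ^ k)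
      (-((∑ k ∈ Finset.range K, wCoeff (β + 1) k * (-x) ^ k) / β)) x := by
  have h : HasDerivAt (fun x => ∑ k ∈ Finset.range K, wCoeff β (k + 1) * (-x) ^ (k + 1))
      (∑ k ∈ Finset.range K, -(wCoeff (β + 1) k * (-x) ^ k / β)) x := by
    refine HasDerivAt.fun_sum fun k _ => ?_
    have := (((hasDerivAt_neg x).fun_pow (k + 1))).const_mul (wCoeff β (k + 1))
    refine this.congr_deriv ?_
    have e := wCoeff_succ hβ k
    push_cast
    linear_combination (-(-x) ^ k) * e
  simp_rw [Finset.sum_range_succ' _ K]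
  rw [Finset.sum_div, ← Finset.sum_neg_distrib]
  simpa using h.add_const (wCoeff β 0)

/-- Global Taylor estimate on the half-line. The constant `2 ^ K` comes from the factors
`1 / β ≤ 2` produced by differentiation. -/
lemma abs_W_sub_taylor_le (K : ℕ) : ∀ {β : ℝ}, 1 / 2 ≤ β → ∀ {x : ℝ}, 0 ≤ x →
    |W β (-x) - ∑ k ∈ Finset.range K, wCoeff β k * (-x) ^ k| ≤ 2 ^ K * x ^ K := by
  induction K with
  | zero =>
    intro β hβ x hx
    simpa using abs_W_neg_le_one hβ hx
  | succ K ih =>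
    intro β hβ x hx
    have hβ0 : 0 < β := by linarith
    have hd : ∀ y ∈ Set.Icc 0 x, HasDerivWithinAt
        (fun y => W β (-y) - ∑ k ∈ Finset.range (K + 1), wCoeff β k * (-y) ^ k)
        (-(W (β + 1) (-y) / β) -
          -((∑ k ∈ Finset.range K, wCoeff (β + 1) k * (-y) ^ k) / β)) (Set.Icc 0 x) y :=
      fun y _ => ((W_neg_hasDerivAt hβ0 y).sub (taylor_hasDerivAt hβ0 K y)).hasDerivWithinAt
    have hbd : ∀ y ∈ Set.Icc 0 x, ‖(-(W (β + 1) (-y) / β) -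
          -((∑ k ∈ Finset.range K, wCoeff (β + 1) k * (-y) ^ k) / β))‖ ≤
          2 ^ K * x ^ K * 2 := by
      intro y hy
      have h1 := ih (β := β + 1) (by linarith) hy.1
      have h2 : (-(W (β + 1) (-y) / β) -
          -((∑ k ∈ Finset.range K, wCoeff (β + 1) k * (-y) ^ k) / β)) =
          -((W (β + 1) (-y) - ∑ k ∈ Finset.range K, wCoeff (β + 1) k * (-y) ^ k) * (1 / β)) := by
        ring
      rw [h2, norm_neg, norm_mul, Real.norm_eq_abs, Real.norm_eq_abs,
        abs_of_pos (one_div_pos.2 hβ0)]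
      have h3 : 1 / β ≤ 2 := by
        rw [div_le_iff₀ hβ0]
        linarith
      have h4 : y ^ K ≤ x ^ K := pow_le_pow_left₀ hy.1 hy.2 K
      exact mul_le_mul (h1.trans (mul_le_mul_of_nonneg_left h4 (by positivity))) h3
        (one_div_pos.2 hβ0).le (by positivity)
    have h := (convex_Icc 0 x).norm_image_sub_le_of_norm_hasDerivWithin_le hd hbd
      (Set.left_mem_Icc.2 hx) (Set.right_mem_Icc.2 hx)
    have h0 : W β (-0) - ∑ k ∈ Finset.range (K + 1), wCoeff β k * (-0) ^ k = 0 := by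
      rw [Finset.sum_range_succ']
      simp [W_zero, wCoeff_zero]
    simp only [h0, sub_zero, Real.norm_eq_abs, abs_of_nonneg hx] at h
    refine h.trans (le_of_eq ?_)
    ring

/-- A sequence all of whose polynomial truncations in `r ^ 2` vanish to the order of the
truncation is zero. -/
lemma coeff_eq_zero_of_small (e : ℕ → ℝ)
    (h : ∀ K : ℕ, ∃ C : ℝ, ∀ r : ℝ, 0 < r → r ≤ 1 →
      |∑ k ∈ Finset.range K, e k * (r ^ 2) ^ k| ≤ C * (r ^ 2) ^ K) (k : ℕ) : e k = 0 := by
  induction k using Nat.strong_induction_on with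
  | _ k ih =>
    obtain ⟨C, hC⟩ := h (k + 1)
    have h1 : ∀ r : ℝ, 0 < r → r ≤ 1 → |e k| ≤ C * r ^ 2 := by
      intro r hr hr1
      have h2 := hC r hr hr1
      rw [Finset.sum_range_succ, Finset.sum_eq_zero (fun i hi => by
        rw [ih i (Finset.mem_range.1 hi), zero_mul]), zero_add, abs_mul,
        abs_of_pos (by positivity : 0 < (r ^ 2) ^ k), pow_succ (r ^ 2) k, mul_comm ((r ^ 2) ^ k),
        ← mul_assoc] at h2
      exact le_of_mul_le_mul_right h2 (by positivity)
    have ht : Filter.Tendsto (fun r : ℝ => C * r ^ 2) (nhdsWithin 0 (Set.Ioi 0)) (nhds 0) := by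
      have : Continuous fun r : ℝ => C * r ^ 2 := by fun_prop
      simpa using (this.tendsto 0).mono_left nhdsWithin_le_nhds
    have h3 : |e k| ≤ 0 := by
      refine ge_of_tendsto ht ?_
      filter_upwards [Ioc_mem_nhdsGT (zero_lt_one' ℝ)] with r hr
      exact h1 r hr.1 hr.2
    exact abs_nonpos_iff.1 h3

/-- Taylor expansion in `r` of the integral transform of `ν`, with coefficients given by the even
moments. -/
lemma integral_sub_taylor_le {β : ℝ} (hβ : 1 / 2 ≤ β) (ν : Measure ℝ)
    (hmom : ∀ k : ℕ, Integrable (fun t : ℝ => t ^ k) ν) (K : ℕ) (r : ℝ) :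
    |(∫ t, W β (-(r ^ 2 * t ^ 2 / 4)) ∂ν) -
      ∑ k ∈ Finset.range K, wCoeff β k * (-1 / 4) ^ k * (∫ t, t ^ (2 * k) ∂ν) * (r ^ 2) ^ k| ≤
      (2 ^ K * (1 / 4) ^ K * ∫ t, t ^ (2 * K) ∂ν) * (r ^ 2) ^ K := by
  have hβ0 : 0 < β := by linarith
  have hterm : ∀ k : ℕ, (fun t : ℝ => wCoeff β k * (-(r ^ 2 * t ^ 2 / 4)) ^ k) =
      fun t => wCoeff β k * (-1 / 4) ^ k * (r ^ 2) ^ k * t ^ (2 * k) := by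
    intro k
    funext t
    rw [show -(r ^ 2 * t ^ 2 / 4) = (-1 / 4) * r ^ 2 * t ^ 2 by ring, mul_pow, mul_pow, pow_mul t]
    ring
  have hint : ∀ k : ℕ, Integrable (fun t : ℝ => wCoeff β k * (-(r ^ 2 * t ^ 2 / 4)) ^ k) ν := by
    intro k
    rw [hterm]
    exact (hmom _).const_mul _
  have hW : Integrable (fun t : ℝ => W β (-(r ^ 2 * t ^ 2 / 4))) ν := by
    -- `hmom 0` says that constants are integrable
    have h0 : Integrable (fun _ : ℝ => (1 : ℝ)) ν := by simpa using hmom 0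
    refine h0.mono' ?_ (Filter.Eventually.of_forall fun t => ?_)
    · exact ((W_continuous hβ0).comp (by fun_prop)).aestronglyMeasurable
    · exact abs_W_neg_le_one hβ (by positivity)
  have hsum : ∑ k ∈ Finset.range K,
      wCoeff β k * (-1 / 4) ^ k * (∫ t, t ^ (2 * k) ∂ν) * (r ^ 2) ^ k =
      ∫ t, ∑ k ∈ Finset.range K, wCoeff β k * (-(r ^ 2 * t ^ 2 / 4)) ^ k ∂ν := by
    rw [integral_finsetSum _ fun k _ => hint k]
    refine Finset.sum_congr rfl fun k _ => ?_
    rw [hterm, integral_const_mul]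
    ring
  rw [hsum, ← integral_sub hW (integrable_finsetSum _ fun k _ => hint k), ← Real.norm_eq_abs]
  have hR : (2 ^ K * (1 / 4) ^ K * ∫ t, t ^ (2 * K) ∂ν) * (r ^ 2) ^ K =
      ∫ t, 2 ^ K * (1 / 4) ^ K * (r ^ 2) ^ K * t ^ (2 * K) ∂ν := by
    rw [integral_const_mul]
    ring
  rw [hR]
  refine norm_integral_le_of_norm_le ((hmom _).const_mul _)
    (Filter.Eventually.of_forall fun t => ?_)
  have h := abs_W_sub_taylor_le K hβ (x := r ^ 2 * t ^ 2 / 4) (by positivity)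
  refine h.trans (le_of_eq ?_)
  rw [show r ^ 2 * t ^ 2 / 4 = (1 / 4) * r ^ 2 * t ^ 2 by ring, mul_pow, mul_pow, pow_mul t]
  ring

/-- If a Borel measure `ν` on `[0,∞)` (modelled as a measure on `ℝ`
vanishing on `(-∞,0)`) has all moments finite and represents the Bessel-type function
`p-1Fp(a;b;-r²)` as `∫₀^∞ Ω_n(rt) dν(t)` with `Ω_n(s) = ₀F₁(-;n/2;-s²/4)`, then its even
moments are `∫ t^{2k} dν = 4^k (a)_k (n/2)_k / (b)_k`. -/
theorem schoenberg_measure_even_moments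
    (n p : ℕ) (hn : 1 ≤ n)
    (a : Fin p → ℝ) (b : Fin (p + 1) → ℝ)
    (ha : ∀ i, 0 < a i) (hb : ∀ j, 0 < b j)
    (ν : Measure ℝ)
    (hsupp : ν (Set.Iio 0) = 0)
    (hmom : ∀ k : ℕ, Integrable (fun t : ℝ => t ^ k) ν)
    (hrep : ∀ r : ℝ,
      (∫ t, pFq (Fin.elim0 : Fin 0 → ℝ) (fun _ : Fin 1 => (n : ℝ) / 2)
          (-(r ^ 2 * t ^ 2 / 4)) ∂ν) = pFq a b (-(r ^ 2))) :
    ∀ k : ℕ,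
      (∫ t, t ^ (2 * k) ∂ν) =
        4 ^ k * (∏ i, risingFactorial (a i) k) * risingFactorial ((n : ℝ) / 2) k /
          ∏ j, risingFactorial (b j) k := by
  have hβ : (1 : ℝ) / 2 ≤ (n : ℝ) / 2 := by
    have : (1 : ℝ) ≤ n := by exact_mod_cast hn
    linarith
  have hβ0 : (0 : ℝ) < (n : ℝ) / 2 := by linarith
  simp_rw [pFq_elim0] at hrep
  intro k
  have hz := coeff_eq_zero_of_small
    (fun k => wCoeff ((n : ℝ) / 2) k * (-1 / 4) ^ k * (∫ t, t ^ (2 * k) ∂ν) -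
      hypCoeff a b k * (-1) ^ k) ?_ k
  · have hA := risingFactorial_pos hβ0 k
    have hB : 0 < ∏ j, risingFactorial (b j) k :=
      Finset.prod_pos fun i _ => risingFactorial_pos (hb i) k
    have hf : (0 : ℝ) < k.factorial := by positivity
    have h4 : (-1 / 4 : ℝ) ^ k = (-1) ^ k / 4 ^ k := div_pow _ _ _
    have h1 : ((-1 : ℝ) ^ k) ≠ 0 := pow_ne_zero _ (by norm_num)
    simp only [wCoeff, hypCoeff, h4] at hz
    have hz' : (-1 : ℝ) ^ k * (1 / (risingFactorial ((n : ℝ) / 2) k * (k.factorial : ℝ)) / 4 ^ k *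
        (∫ t, t ^ (2 * k) ∂ν)) = (-1 : ℝ) ^ k * ((∏ i, risingFactorial (a i) k) /
          ((∏ j, risingFactorial (b j) k) * (k.factorial : ℝ))) := by
      linear_combination hz
    have hz2 := mul_left_cancel₀ h1 hz'
    generalize (∫ t, t ^ (2 * k) ∂ν) = I at hz2 ⊢
    generalize (∏ j, risingFactorial (b j) k) = B at *
    generalize (∏ i, risingFactorial (a i) k) = A at *
    generalize risingFactorial ((n : ℝ) / 2) k = R at *
    rw [eq_div_iff hB.ne']
    have e1 : I = 1 / (R * (k.factorial : ℝ)) / 4 ^ k * I * (R * k.factorial * 4 ^ k) := by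
      field_simp
    rw [e1, hz2]
    field_simp
  · intro K
    obtain ⟨C, hC⟩ := pFq_sub_taylor_le a b ha hb K
    refine ⟨2 ^ K * (1 / 4) ^ K * (∫ t, t ^ (2 * K) ∂ν) + C, fun r hr hr1 => ?_⟩
    have h1 := integral_sub_taylor_le hβ ν hmom K r
    have h2 := hC (-(r ^ 2)) (by
      rw [abs_neg, abs_of_nonneg (sq_nonneg r)]
      exact pow_le_one₀ hr.le hr1)
    rw [abs_neg, abs_of_nonneg (sq_nonneg r), ← hrep r] at h2
    have h3 : ∑ k ∈ Finset.range K, hypCoeff a b k * (-(r ^ 2)) ^ k =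
        ∑ k ∈ Finset.range K, hypCoeff a b k * (-1) ^ k * (r ^ 2) ^ k :=
      Finset.sum_congr rfl fun k _ => by
        rw [neg_pow]
        ring
    rw [h3] at h2
    simp_rw [sub_mul, Finset.sum_sub_distrib]
    rw [add_mul, abs_le]
    rw [abs_le] at h1 h2
    constructor <;> linarith [h1.1, h1.2, h2.1, h2.2]
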